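/- For every n ≥ 1 and σ ∈ (0,2) there exist constants c₁, c₂, c > 0 such that for all w ∈ ℝ^n: (i) c₁ (1+|w|²)^{−(n+σ)/2} ≤ Ψ_n(w) ≤ c₂ (1+|w|²)^{−(n+σ)/2}; (ii) |LΨ_n(w)| ≤ c (1+|w|²)^{−(n+σ)/2}; (iii) |∇Ψ_n(w)| ≤ c (1+|w|²)^{−(n+σ+1)/2}; (iv) |∇(LΨ_n)(w)| ≤ c (1+|w|²)^{−(n+σ+1)/2}. -/

import Mathlib

open MeasureTheory Metric Real Set
open scoped InnerProductSpace ENNReal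

noncomputable section

/-- `ℝ^n` as a Euclidean space. -/
abbrev Eu (n : ℕ) := EuclideanSpace ℝ (Fin n)

/-- The heat-kernel profile `Ψ_n` of the fractional Laplacian `(−Δ)^{σ/2}` in `ℝ^n`:
`Ψ_n(w) = (2π)^{−n} ∫_{ℝ^n} e^{−|ξ|^σ} e^{i w·ξ} dξ`. -/
def Psi (n : ℕ) (σ : ℝ) (w : Eu n) : ℝ :=
  (2 * π) ^ (-(n : ℝ)) *
    (∫ ξ : Eu n, ((Real.exp (-‖ξ‖ ^ σ) : ℝ) : ℂ) *
      Complex.exp (Complex.I * (⟪w, ξ⟫_ℝ : ℂ))).re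

/-- `LΨ_n`, the inverse Fourier transform of `|ξ|^σ e^{−|ξ|^σ}`. -/
def LPsi (n : ℕ) (σ : ℝ) (w : Eu n) : ℝ :=
  (2 * π) ^ (-(n : ℝ)) *
    (∫ ξ : Eu n, ((‖ξ‖ ^ σ * Real.exp (-‖ξ‖ ^ σ) : ℝ) : ℂ) *
      Complex.exp (Complex.I * (⟪w, ξ⟫_ℝ : ℂ))).re

/-- `ℝ^N = ℝ^{n₁} × ⋯ × ℝ^{n_M}` (with the Euclidean norm), `N = n₁ + ⋯ + n_M`. -/
abbrev XSp {M : ℕ} (n : Fin M → ℕ) := PiLp 2 (fun k => Eu (n k))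

/-- The heat-kernel profile `Φ(x) = ∏_k Ψ_{n_k}(x^k)` of `𝓛 = Σ_k (−Δ_{x^k})^{σ/2}`. -/
def PhiProd {M : ℕ} (n : Fin M → ℕ) (σ : ℝ) (x : XSp n) : ℝ :=
  ∏ k, Psi (n k) σ (x k)

/-- `𝓛Φ(x) = Σ_k (LΨ_{n_k})(x^k) ∏_{i≠k} Ψ_{n_i}(x^i)`. -/
def LPhiProd {M : ℕ} (n : Fin M → ℕ) (σ : ℝ) (x : XSp n) : ℝ :=
  ∑ k, LPsi (n k) σ (x k) * ∏ i ∈ Finset.univ.erase k, Psi (n i) σ (x i)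

open Filter Topology

/-- If `1 - ∫ e^{-ls} dρ(s) ~ κ l^α` as `l → 0`, the laws of normalised sums of independent copies
of `ρ`, seen on the unit interval through `s ↦ e^{-s}`, have a cluster point. -/
lemma exists_unitInterval_measure_integral_rpow {ρ : Measure ℝ} [IsProbabilityMeasure ρ]
    (hρ : ∀ᵐ s ∂ρ, 0 ≤ s) {α κ : ℝ} (hα : 0 < α) (hκ : 0 < κ)
    (hlim : Tendsto (fun l : ℝ => (1 - ∫ s, exp (-(l * s)) ∂ρ) / l ^ α) (𝓝[>] 0) (𝓝 κ)) :
    ∃ ν : ProbabilityMeasure unitInterval, ∀ l : ℝ, 0 < l →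
      ∫ x : unitInterval, (x : ℝ) ^ l ∂(ν : Measure unitInterval) = exp (-l ^ α) := by
  let c : ℕ → ℝ := fun N => (κ * N) ^ (-α⁻¹)
  have hc0 : ∀ N, 0 ≤ c N := fun N => by positivity
  let e : ℕ → ℝ → unitInterval := fun N s => ⟨exp (-(c N * max s 0)), by positivity, by
    rw [Real.exp_le_one_iff, neg_nonpos]; exact mul_nonneg (hc0 N) (le_max_right _ _)⟩
  have he : ∀ N, Measurable (e N) := fun N => by
    apply Measurable.subtype_mk; fun_prop
  have hp : ∀ N : ℕ, Measurable (fun v : Fin N → unitInterval => ∏ i, v i) := fun N =>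
    Continuous.measurable (by fun_prop)
  have hpr : ∀ N, IsProbabilityMeasure (ρ.map (e N)) := fun N =>
    Measure.isProbabilityMeasure_map (he N).aemeasurable
  let ν : ℕ → ProbabilityMeasure unitInterval := fun N =>
    ⟨(Measure.pi (fun _ : Fin N => ρ.map (e N))).map (fun v => ∏ i, v i),
      Measure.isProbabilityMeasure_map (hp N).aemeasurable⟩
  have hcont : ∀ l : ℝ, 0 < l → Continuous (fun x : unitInterval => (x : ℝ) ^ l) := fun l hl =>
    continuous_subtype_val.rpow_const (fun _ => Or.inr hl.le)
  have hint : ∀ N (l : ℝ), 0 < l → ∫ x : unitInterval, (x : ℝ) ^ l ∂(ν N : Measure unitInterval)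
      = (∫ s, exp (-(l * c N * s)) ∂ρ) ^ N := by
    intro N l hl
    have h1 : ∫ x : unitInterval, (x : ℝ) ^ l ∂(ν N : Measure unitInterval) =
        ∫ v : Fin N → unitInterval, ∏ i, ((v i : ℝ) ^ l)
          ∂(Measure.pi (fun _ : Fin N => ρ.map (e N))) := by
      change ∫ x : unitInterval, (x : ℝ) ^ l ∂((Measure.pi (fun _ : Fin N => ρ.map (e N))).map _) = _
      rw [integral_map (hp N).aemeasurable (hcont l hl).aestronglyMeasurable]
      congr 1 with v
      rw [Real.finsetProd_rpow _ _ (fun i _ => (v i).2.1)]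
      congr 1
      exact map_prod (⟨⟨fun x : unitInterval => (x : ℝ), rfl⟩, fun _ _ => rfl⟩ :
        unitInterval →* ℝ) v Finset.univ
    rw [h1, integral_fintype_prod_eq_pow (fun x : unitInterval => (x : ℝ) ^ l), Fintype.card_fin,
      integral_map (he N).aemeasurable (hcont l hl).aestronglyMeasurable]
    congr 1
    refine integral_congr_ae ?_
    filter_upwards [hρ] with s hs
    simp only [e, max_eq_left hs]
    rw [← Real.exp_mul]
    congr 1; ring
  have hlimit : ∀ l : ℝ, 0 < l → Tendsto
      (fun N => ∫ x : unitInterval, (x : ℝ) ^ l ∂(ν N : Measure unitInterval)) atTop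
      (𝓝 (exp (-l ^ α))) := by
    intro l hl
    simp_rw [hint _ l hl]
    have hct : Tendsto (fun N : ℕ => l * c N) atTop (𝓝[>] 0) := by
      rw [tendsto_nhdsWithin_iff]
      constructor
      · have : Tendsto (fun N : ℕ => κ * (N : ℝ)) atTop atTop :=
          tendsto_natCast_atTop_atTop.const_mul_atTop hκ
        simpa using ((tendsto_rpow_neg_atTop (inv_pos.2 hα)).comp this).const_mul l
      · filter_upwards [eventually_gt_atTop 0] with N hN
        have : (0 : ℝ) < N := by exact_mod_cast hN
        simp only [mem_Ioi, c]; positivity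
    have h2 := (hlim.comp hct).const_mul (-(l ^ α / κ))
    have h3 : -(l ^ α / κ) * κ = -l ^ α := by field_simp
    rw [h3] at h2
    have h4 := Real.tendsto_one_add_pow_exp_of_tendsto
      (g := fun N : ℕ => ∫ s, exp (-(l * c N * s)) ∂ρ - 1) (t := -l ^ α) ?_
    · simpa using h4
    · refine h2.congr' ?_
      filter_upwards [eventually_gt_atTop 0] with N hN
      have hN' : (0 : ℝ) < N := by exact_mod_cast hN
      have hcα : (l * c N) ^ α = l ^ α * (κ * N)⁻¹ := by
        rw [Real.mul_rpow hl.le (hc0 N)]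
        simp only [c]
        rw [← Real.rpow_mul (by positivity), neg_mul, inv_mul_cancel₀ hα.ne', Real.rpow_neg_one]
      have hlα : 0 < l ^ α := Real.rpow_pos_of_pos hl α
      simp only [Function.comp_apply]
      rw [hcα]
      field_simp
      ring
  let U := (hyperfilter ℕ).map ν
  obtain ⟨ν₀, hν₀⟩ : ∃ ν₀, Tendsto ν (hyperfilter ℕ : Filter ℕ) (𝓝 ν₀) := by
    obtain ⟨x, -, hx⟩ := isCompact_univ.ultrafilter_le_nhds U (by simp)
    exact ⟨x, hx⟩
  refine ⟨ν₀, fun l hl => ?_⟩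
  have h1 := (ProbabilityMeasure.tendsto_iff_forall_integral_tendsto.1 hν₀)
    (BoundedContinuousFunction.mkOfCompact ⟨_, hcont l hl⟩)
  exact tendsto_nhds_unique h1 ((hlimit l hl).mono_left Nat.hyperfilter_le_atTop)

/-- A measure on the unit interval with moments `e^{-l^α}` is the image under `s ↦ e^{-s}` of the
law of an `α`-stable subordinator. -/
lemma exists_measure_of_integral_rpow {ν : ProbabilityMeasure unitInterval} {α : ℝ} (hα : 0 < α)
    (hν : ∀ l : ℝ, 0 < l →
      ∫ x : unitInterval, (x : ℝ) ^ l ∂(ν : Measure unitInterval) = exp (-l ^ α)) :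
    ∃ μ : Measure ℝ, IsProbabilityMeasure μ ∧ (∀ᵐ s ∂μ, 0 < s) ∧
      ∀ l : ℝ, 0 < l → ∫ s, exp (-(l * s)) ∂μ = exp (-l ^ α) := by
  have hint : ∀ l : ℝ, 0 < l →
      Integrable (fun x : unitInterval => (x : ℝ) ^ l) (ν : Measure unitInterval) := by
    intro l hl
    refine Integrable.of_bound (C := 1)
      (continuous_subtype_val.rpow_const (fun _ => Or.inr hl.le)).aestronglyMeasurable ?_
    filter_upwards with x
    rw [Real.norm_of_nonneg (Real.rpow_nonneg x.2.1 _)]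
    exact Real.rpow_le_one x.2.1 x.2.2 hl.le
  have h0 : ∀ᵐ x : unitInterval ∂(ν : Measure unitInterval), x ≠ 0 := by
    have hle : ∀ l : ℝ, 0 < l → exp (-l ^ α) ≤ (ν : Measure unitInterval).real {0}ᶜ := by
      intro l hl
      rw [← hν l hl, ← integral_indicator_one (measurableSet_singleton _).compl]
      refine integral_mono (hint l hl) ((integrable_const 1).indicator
        (measurableSet_singleton _).compl) fun x => ?_
      by_cases hx : x = 0
      · simp [hx, Real.zero_rpow hl.ne']
      · simp only [indicator, mem_compl_iff, mem_singleton_iff, hx, not_false_eq_true, if_true]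
        exact Real.rpow_le_one x.2.1 x.2.2 hl.le
    have hlim : Tendsto (fun l : ℝ => exp (-l ^ α)) (𝓝[>] 0) (𝓝 1) := by
      have : Continuous (fun l : ℝ => exp (-l ^ α)) :=
        Real.continuous_exp.comp (continuous_id.rpow_const fun _ => Or.inr hα.le).neg
      have := this.tendsto 0
      rw [Real.zero_rpow hα.ne', neg_zero, exp_zero] at this
      exact this.mono_left nhdsWithin_le_nhds
    have h1 : 1 ≤ (ν : Measure unitInterval).real {0}ᶜ :=
      le_of_tendsto hlim (eventually_mem_nhdsWithin.mono fun l hl => hle l hl)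
    have h2 := probReal_compl_eq_one_sub (μ := (ν : Measure unitInterval))
      (measurableSet_singleton (0 : unitInterval))
    have h3 : (ν : Measure unitInterval).real {0} = 0 :=
      le_antisymm (by linarith) measureReal_nonneg
    rw [measureReal_eq_zero_iff] at h3
    exact measure_eq_zero_iff_ae_notMem.1 h3
  have h1 : ∀ᵐ x : unitInterval ∂(ν : Measure unitInterval), x ≠ 1 := by
    have hle : ∀ l : ℝ, 0 < l → (ν : Measure unitInterval).real {1} ≤ exp (-l ^ α) := by
      intro l hl
      rw [← hν l hl, ← integral_indicator_one (measurableSet_singleton _)]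
      refine integral_mono ((integrable_const 1).indicator
        (measurableSet_singleton _)) (hint l hl) fun x => ?_
      by_cases hx : x = 1
      · simp [hx]
      · simp only [indicator, mem_singleton_iff, hx, if_false]
        exact Real.rpow_nonneg x.2.1 _
    have hlim : Tendsto (fun l : ℝ => exp (-l ^ α)) atTop (𝓝 0) :=
      Real.tendsto_exp_neg_atTop_nhds_zero.comp (tendsto_rpow_atTop hα)
    have h3 : (ν : Measure unitInterval).real {1} = 0 := le_antisymm
      (ge_of_tendsto hlim ((eventually_gt_atTop 0).mono fun l hl => hle l hl)) measureReal_nonneg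
    rw [measureReal_eq_zero_iff] at h3
    exact measure_eq_zero_iff_ae_notMem.1 h3
  have hm : Measurable (fun x : unitInterval => -Real.log (x : ℝ)) :=
    (Real.measurable_log.comp measurable_subtype_coe).neg
  refine ⟨(ν : Measure unitInterval).map (fun x : unitInterval => -Real.log (x : ℝ)),
    Measure.isProbabilityMeasure_map hm.aemeasurable, ?_, fun l hl => ?_⟩
  · rw [ae_map_iff hm.aemeasurable measurableSet_Ioi]
    filter_upwards [h0, h1] with x hx0 hx1
    have hx0' : (0 : ℝ) < x := unitInterval.pos_iff_ne_zero.2 hx0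
    have hx1' : (x : ℝ) < 1 := unitInterval.lt_one_iff_ne_one.2 hx1
    linarith [Real.log_neg hx0' hx1']
  · rw [integral_map hm.aemeasurable
      (Continuous.aestronglyMeasurable (by fun_prop : Continuous fun s => exp (-(l * s)))), ← hν l hl]
    refine integral_congr_ae ?_
    filter_upwards [h0] with x hx0
    have hx0' : (0 : ℝ) < x := unitInterval.pos_iff_ne_zero.2 hx0
    rw [Real.rpow_def_of_pos hx0']
    congr 1; ring

lemma integrableOn_one_sub_exp_mul_rpow {α : ℝ} (hα0 : 0 < α) (hα1 : α < 1) :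
    IntegrableOn (fun u : ℝ => (1 - exp (-u)) * u ^ (-(α + 1))) (Ioi 0) := by
  have hm : Measurable (fun u : ℝ => (1 - exp (-u)) * u ^ (-(α + 1))) := by fun_prop
  rw [← Ioc_union_Ioi_eq_Ioi zero_le_one, integrableOn_union]
  constructor
  · have h : IntegrableOn (fun u : ℝ => u ^ (-α)) (Ioc 0 1) := by
      rw [← intervalIntegrable_iff_integrableOn_Ioc_of_le zero_le_one]
      exact intervalIntegral.intervalIntegrable_rpow' (by linarith)
    refine Integrable.mono' h hm.aestronglyMeasurable ?_
    filter_upwards [ae_restrict_mem measurableSet_Ioc] with u hu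
    have h1 : 0 ≤ 1 - exp (-u) := by
      have := Real.exp_le_one_iff.2 (neg_nonpos.2 hu.1.le); linarith
    have h2 : 1 - exp (-u) ≤ u := by linarith [Real.add_one_le_exp (-u)]
    rw [Real.norm_of_nonneg (mul_nonneg h1 (Real.rpow_nonneg hu.1.le _))]
    have h3 : u ^ (-α) = u * u ^ (-(α + 1)) := by
      rw [← Real.rpow_one_add' hu.1.le (by linarith)]; congr 1; ring
    rw [h3]
    exact mul_le_mul_of_nonneg_right h2 (Real.rpow_nonneg hu.1.le _)
  · refine Integrable.mono' (integrableOn_Ioi_rpow_of_lt (by linarith : -(α + 1) < -1) one_pos)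
      hm.aestronglyMeasurable ?_
    filter_upwards [ae_restrict_mem measurableSet_Ioi] with u hu
    have hu0 : 0 < u := one_pos.trans hu
    have h1 : 0 ≤ 1 - exp (-u) := by
      have := Real.exp_le_one_iff.2 (neg_nonpos.2 hu0.le); linarith
    have h2 : 1 - exp (-u) ≤ 1 := by linarith [Real.exp_pos (-u)]
    rw [Real.norm_of_nonneg (mul_nonneg h1 (Real.rpow_nonneg hu0.le _))]
    exact mul_le_of_le_one_left (Real.rpow_nonneg hu0.le _) h2

lemma measurable_paretoPDF (t r : ℝ) : Measurable (ProbabilityTheory.paretoPDF t r) :=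
  (ProbabilityTheory.measurable_paretoPDFReal t r).ennreal_ofReal

lemma ae_nonneg_paretoMeasure (α : ℝ) : ∀ᵐ s ∂(ProbabilityTheory.paretoMeasure 1 α), 0 ≤ s := by
  rw [ProbabilityTheory.paretoMeasure, ae_withDensity_iff (measurable_paretoPDF 1 α)]
  filter_upwards with s hs
  by_contra! h
  exact hs (ProbabilityTheory.paretoPDF_of_lt (by linarith))

lemma one_sub_integral_exp_pareto {α l : ℝ} (hα : 0 < α) (hl : 0 < l) :
    1 - ∫ s, exp (-(l * s)) ∂(ProbabilityTheory.paretoMeasure 1 α) =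
      l ^ α * (α * ∫ u in Ioi l, (1 - exp (-u)) * u ^ (-(α + 1))) := by
  have := ProbabilityTheory.isProbabilityMeasure_paretoMeasure (t := 1) one_pos hα
  have hae := ae_nonneg_paretoMeasure α
  have hint : Integrable (fun s => exp (-(l * s))) (ProbabilityTheory.paretoMeasure 1 α) := by
    refine Integrable.of_bound (C := 1) (by fun_prop) ?_
    filter_upwards [hae] with s hs
    rw [Real.norm_of_nonneg (exp_pos _).le, Real.exp_le_one_iff]
    nlinarith [mul_nonneg hl.le hs]
  have h1 : 1 - ∫ s, exp (-(l * s)) ∂(ProbabilityTheory.paretoMeasure 1 α) =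
      ∫ s, (1 - exp (-(l * s))) ∂(ProbabilityTheory.paretoMeasure 1 α) := by
    rw [integral_sub (integrable_const _) hint]; simp
  have h2 : ∀ s, (ProbabilityTheory.paretoPDF 1 α s).toReal • (1 - exp (-(l * s))) =
      (Ici 1).indicator (fun s => α * ((1 - exp (-(l * s))) * s ^ (-(α + 1)))) s := by
    intro s
    by_cases hs : 1 ≤ s
    · rw [indicator_of_mem (show s ∈ Ici 1 from hs), ProbabilityTheory.paretoPDF_of_le hs,
        ENNReal.toReal_ofReal (by have : 0 < s := by linarith
                                  positivity)]
      simp only [one_rpow, smul_eq_mul]; ring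
    · rw [indicator_of_notMem (show s ∉ Ici 1 from hs),
        ProbabilityTheory.paretoPDF_of_lt (not_le.1 hs)]
      simp
  rw [h1, ProbabilityTheory.paretoMeasure, integral_withDensity_eq_integral_toReal_smul
    (measurable_paretoPDF 1 α)
    (by filter_upwards with s using ENNReal.ofReal_lt_top)]
  simp_rw [h2]
  rw [integral_indicator measurableSet_Ici, integral_Ici_eq_integral_Ioi, integral_const_mul]
  have h3 := integral_comp_mul_left_Ioi (fun u => (1 - exp (-u)) * u ^ (-(α + 1))) 1 hl
  rw [mul_one, smul_eq_mul] at h3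
  have h4 : ∫ s in Ioi (1 : ℝ), (1 - exp (-(l * s))) * s ^ (-(α + 1)) =
      l ^ (α + 1) * ∫ s in Ioi (1 : ℝ), (1 - exp (-(l * s))) * (l * s) ^ (-(α + 1)) := by
    rw [← integral_const_mul]
    refine setIntegral_congr_fun measurableSet_Ioi fun s hs => ?_
    have hs0 : (0 : ℝ) ≤ s := zero_le_one.trans (le_of_lt hs)
    rw [Real.mul_rpow hl.le hs0, Real.rpow_neg hl.le]
    have := Real.rpow_pos_of_pos hl (α + 1)
    field_simp
  rw [h4, h3, Real.rpow_add_one hl.ne']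
  field_simp

/-- The law of the `α`-stable subordinator at time one. -/
lemma exists_stable_subordinator {α : ℝ} (hα0 : 0 < α) (hα1 : α < 1) :
    ∃ μ : Measure ℝ, IsProbabilityMeasure μ ∧ (∀ᵐ s ∂μ, 0 < s) ∧
      ∀ l : ℝ, 0 < l → ∫ s, exp (-(l * s)) ∂μ = exp (-l ^ α) := by
  have := ProbabilityTheory.isProbabilityMeasure_paretoMeasure (t := 1) one_pos hα0
  have hae := ae_nonneg_paretoMeasure α
  have hI := integrableOn_one_sub_exp_mul_rpow hα0 hα1
  have hκ : 0 < α * ∫ u in Ioi (0 : ℝ), (1 - exp (-u)) * u ^ (-(α + 1)) := by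
    refine mul_pos hα0 ?_
    rw [setIntegral_pos_iff_support_of_nonneg_ae]
    · refine lt_of_lt_of_le (b := volume (Ioi (0 : ℝ))) (by simp) (measure_mono fun u hu => ⟨?_, hu⟩)
      have h1 : exp (-u) < 1 := Real.exp_lt_one_iff.2 (neg_lt_zero.2 hu)
      exact (mul_pos (by linarith) (Real.rpow_pos_of_pos hu _)).ne'
    · filter_upwards [ae_restrict_mem measurableSet_Ioi] with u hu
      have h1 : exp (-u) < 1 := Real.exp_lt_one_iff.2 (neg_lt_zero.2 hu)
      exact (mul_pos (by linarith) (Real.rpow_pos_of_pos hu _)).le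
    · exact hI
  obtain ⟨ν, hν⟩ := exists_unitInterval_measure_integral_rpow hae hα0 hκ (by
    have hcov : AECover (volume.restrict (Ioi (0 : ℝ))) (𝓝[>] 0) fun l : ℝ => Ioi l :=
      aecover_Ioi_of_Ioi (tendsto_id.mono_left nhdsWithin_le_nhds)
    have h1 := (hcov.integral_tendsto_of_countably_generated hI).const_mul α
    refine h1.congr' ?_
    filter_upwards [self_mem_nhdsWithin] with l hl
    have hl : 0 < l := hl
    rw [one_sub_integral_exp_pareto hα0 hl, mul_div_cancel_left₀ _
      (Real.rpow_pos_of_pos hl α).ne', Measure.restrict_restrict measurableSet_Ioi,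
      inter_eq_left.2 (Ioi_subset_Ioi hl.le)])
  exact exists_measure_of_integral_rpow hα0 hν

lemma sub_sq_div_two_le_one_sub_exp_neg {x : ℝ} (hx : 0 ≤ x) : x - x ^ 2 / 2 ≤ 1 - exp (-x) := by
  have h1 := Real.quadratic_le_exp_of_nonneg hx
  have h2 : exp (-x) * exp x = 1 := by rw [← Real.exp_add]; simp
  have h3 : exp (-x) * (1 + x + x ^ 2 / 2) ≤ 1 := by
    exact (mul_le_mul_of_nonneg_left h1 (exp_pos _).le).trans h2.le
  have h4 : exp (-x) ≤ 1 - x + x ^ 2 / 2 := by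
    by_contra! h
    have h5 : 0 < 1 + x + x ^ 2 / 2 := by positivity
    nlinarith [mul_lt_mul_of_pos_right h h5, sq_nonneg (x ^ 2)]
  linarith

lemma rpow_le_mul_exp {k u : ℝ} (hk : 0 < k) (hu : 0 ≤ u) : u ^ k ≤ k ^ k * exp u := by
  have h1 : u / k ≤ exp (u / k) := by linarith [Real.add_one_le_exp (u / k)]
  have h2 := Real.rpow_le_rpow (by positivity) h1 hk.le
  rw [← Real.exp_mul, div_mul_cancel₀ _ hk.ne', Real.div_rpow hu hk.le,
    div_le_iff₀ (Real.rpow_pos_of_pos hk k)] at h2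
  linarith

lemma exists_rpow_mul_exp_le_one_sub_exp {k : ℝ} (hk : 0 < k) :
    ∃ C > 0, ∀ t : ℝ, 0 < t → t ^ (-k) * exp (-(1 / t)) ≤ C * (1 - exp (-t)) := by
  refine ⟨k ^ k + (k + 1) ^ (k + 1), by positivity, fun t ht => ?_⟩
  set u := 1 / t with hu
  have hu0 : 0 < u := by positivity
  have htu : t ^ (-k) = u ^ k := by rw [hu, one_div, Real.inv_rpow ht.le, Real.rpow_neg ht.le]
  have h1 : t / (1 + t) ≤ 1 - exp (-t) := by
    have h2 : exp (-t) ≤ 1 / (1 + t) := by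
      rw [Real.exp_neg, ← one_div]
      exact one_div_le_one_div_of_le (by positivity) (by linarith [Real.add_one_le_exp t])
    have h3 : t / (1 + t) = 1 - 1 / (1 + t) := by field_simp; ring
    linarith
  have h2 : t / (1 + t) = 1 / (1 + u) := by rw [hu]; field_simp; ring
  have h3 := rpow_le_mul_exp hk hu0.le
  have h4 := rpow_le_mul_exp (k := k + 1) (by linarith) hu0.le
  have h5 : u ^ k * exp (-u) * (1 + u) ≤ k ^ k + (k + 1) ^ (k + 1) := by
    have h6 : u ^ k * exp (-u) * (1 + u) = (u ^ k + u ^ (k + 1)) * exp (-u) := by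
      rw [Real.rpow_add_one hu0.ne']; ring
    rw [h6, Real.exp_neg, ← div_eq_mul_inv, div_le_iff₀ (exp_pos u)]
    linarith
  rw [htu]
  refine le_trans ?_ (mul_le_mul_of_nonneg_left h1 (by positivity))
  rw [h2, mul_one_div, le_div_iff₀ (by positivity)]
  exact h5

lemma exists_exp_sub_exp_le_rpow_mul_exp {k ε M : ℝ} (hk : 0 < k) (hε : 0 < ε) (hM : 0 < M) :
    ∃ C > 0, ∀ t : ℝ, 0 < t →
      (1 - exp (-t)) - (1 - exp (-(ε * t))) - (1 - exp (-(M * t))) / M ≤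
        C * (t ^ (-k) * exp (-(1 / t))) := by
  let δ := 2 * ε / (ε ^ 2 + M)
  have hδ : 0 < δ := by positivity
  obtain ⟨T, hT0, hT⟩ : ∃ T > 0, ∀ t ≥ T, exp (-(ε * t)) ≤ 1 / (2 * M) ∧ exp (-(M * t)) ≤ 1 / 2 := by
    have key : ∀ c : ℝ, 0 < c → Tendsto (fun t : ℝ => exp (-(c * t))) atTop (𝓝 0) := fun c hc =>
      Real.tendsto_exp_neg_atTop_nhds_zero.comp (tendsto_id.const_mul_atTop hc)
    have h1 := (key ε hε).eventually (eventually_le_nhds (show 0 < 1 / (2 * M) by positivity))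
    have h2 := (key M hM).eventually (eventually_le_nhds (show (0 : ℝ) < 1 / 2 by norm_num))
    obtain ⟨T, hT⟩ := eventually_atTop.1 (h1.and h2)
    exact ⟨max T 1, by positivity, fun t ht => hT t ((le_max_left _ _).trans ht)⟩
  refine ⟨(T ^ (-k) * exp (-(1 / δ)))⁻¹, by positivity, fun t ht => ?_⟩
  have hrhs : 0 ≤ (T ^ (-k) * exp (-(1 / δ)))⁻¹ * (t ^ (-k) * exp (-(1 / t))) := by positivity
  rcases le_or_gt t δ with h | h
  · refine le_trans ?_ hrhs
    have h1 : 1 - exp (-t) ≤ t := by linarith [Real.add_one_le_exp (-t)]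
    have h2 := sub_sq_div_two_le_one_sub_exp_neg (x := ε * t) (by positivity)
    have h3 := sub_sq_div_two_le_one_sub_exp_neg (x := M * t) (by positivity)
    have h4 : t - M * t ^ 2 / 2 ≤ (1 - exp (-(M * t))) / M := by
      rw [le_div_iff₀ hM]
      calc (t - M * t ^ 2 / 2) * M = M * t - (M * t) ^ 2 / 2 := by ring
        _ ≤ _ := h3
    have h5 : t * (ε ^ 2 + M) ≤ 2 * ε := (le_div_iff₀ (by positivity)).1 h
    nlinarith [mul_le_mul_of_nonneg_left h5 ht.le]
  rcases le_or_gt T t with h' | h'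
  · refine le_trans ?_ hrhs
    obtain ⟨h1, h2⟩ := hT t h'
    have h3 : 1 / (2 * M) ≤ (1 - exp (-(M * t))) / M := by
      rw [div_le_div_iff₀ (by positivity) hM]
      nlinarith
    linarith [exp_pos (-t)]
  · have h1 : T ^ (-k) * exp (-(1 / δ)) ≤ t ^ (-k) * exp (-(1 / t)) := by
      refine mul_le_mul ?_ ?_ (exp_pos _).le (by positivity)
      · exact Real.rpow_le_rpow_of_nonpos ht h'.le (by linarith)
      · exact Real.exp_le_exp.2 (neg_le_neg (one_div_le_one_div_of_le hδ h.le))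
    have h2 : 1 ≤ (T ^ (-k) * exp (-(1 / δ)))⁻¹ * (t ^ (-k) * exp (-(1 / t))) := by
      rw [inv_mul_eq_div, one_le_div (by positivity)]; exact h1
    have h3 : exp (-(ε * t)) ≤ 1 := Real.exp_le_one_iff.2 (by rw [neg_nonpos]; positivity)
    have h4 : 0 ≤ (1 - exp (-(M * t))) / M :=
      div_nonneg (by linarith [Real.exp_le_one_iff.2 (show -(M * t) ≤ 0 by
        rw [neg_nonpos]; positivity)]) hM.le
    linarith [exp_pos (-t)]

/-- The integral `∫ s^{-k} e^{-a/s} dμ(s)`. For `k = n / 2` and `a = |w|² / 4` it is, up to a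
constant, a mixture of Gaussian densities at `w`. -/
def gaussianMixture (μ : Measure ℝ) (k a : ℝ) : ℝ := ∫ s, s ^ (-k) * exp (-(a / s)) ∂μ

lemma gaussianMixture_nonneg {μ : Measure ℝ} (hμ0 : ∀ᵐ s ∂μ, 0 < s) (k a : ℝ) :
    0 ≤ gaussianMixture μ k a := by
  refine integral_nonneg_of_ae ?_
  filter_upwards [hμ0] with s hs
  positivity

section Subordinator

variable {μ : Measure ℝ} [IsProbabilityMeasure μ] {α : ℝ}

lemma integrable_exp_neg_mul (hμ0 : ∀ᵐ s ∂μ, 0 < s) {l : ℝ} (hl : 0 ≤ l) :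
    Integrable (fun s => exp (-(l * s))) μ := by
  refine Integrable.of_bound (C := 1)
    (Continuous.aestronglyMeasurable (by fun_prop : Continuous fun s => exp (-(l * s)))) ?_
  filter_upwards [hμ0] with s hs
  rw [Real.norm_of_nonneg (exp_pos _).le, Real.exp_le_one_iff, neg_nonpos]
  positivity

lemma integrable_rpow_neg (hμ0 : ∀ᵐ s ∂μ, 0 < s) (hα : 0 < α)
    (hμ : ∀ l : ℝ, 0 < l → ∫ s, exp (-(l * s)) ∂μ = exp (-l ^ α)) {k : ℝ} (hk : 0 < k) :
    Integrable (fun s => s ^ (-k)) μ := by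
  let F : ℝ × ℝ → ℝ := fun p => p.2 ^ (k - 1) * exp (-(p.1 * p.2))
  have hF : Measurable F := by fun_prop
  have hFi : Integrable F (μ.prod (volume.restrict (Ioi 0))) := by
    rw [integrable_prod_iff' hF.aestronglyMeasurable]
    constructor
    · filter_upwards [ae_restrict_mem measurableSet_Ioi] with t ht
      have := (integrable_exp_neg_mul hμ0 (le_of_lt ht)).const_mul (t ^ (k - 1))
      simpa only [F, mul_comm t] using this
    · have h1 : IntegrableOn (fun t : ℝ => t ^ (k - 1) * exp (-t ^ α)) (Ioi 0) :=
        integrableOn_rpow_mul_exp_neg_rpow (by linarith) hα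
      refine h1.congr ?_
      filter_upwards [ae_restrict_mem measurableSet_Ioi] with t ht
      have ht : 0 < t := ht
      rw [← hμ t ht, ← integral_const_mul]
      congr 1 with s
      simp only [F]
      rw [Real.norm_of_nonneg (by positivity), mul_comm t]
  refine (hFi.integral_prod_left.div_const (Gamma k)).congr ?_
  filter_upwards [hμ0] with s hs
  simp only [F]
  rw [Real.integral_rpow_mul_exp_neg_mul_Ioi hk hs, mul_div_cancel_right₀ _
    (Real.Gamma_pos_of_pos hk).ne', one_div, Real.inv_rpow hs.le, Real.rpow_neg hs.le]

lemma integrable_rpow_neg_mul_exp (hμ0 : ∀ᵐ s ∂μ, 0 < s) (hα : 0 < α)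
    (hμ : ∀ l : ℝ, 0 < l → ∫ s, exp (-(l * s)) ∂μ = exp (-l ^ α)) {k a : ℝ} (hk : 0 < k)
    (ha : 0 ≤ a) : Integrable (fun s => s ^ (-k) * exp (-(a / s))) μ := by
  have hm : Measurable (fun s : ℝ => s ^ (-k) * exp (-(a / s))) := by fun_prop
  refine Integrable.mono' (integrable_rpow_neg hμ0 hα hμ hk) hm.aestronglyMeasurable ?_
  filter_upwards [hμ0] with s hs
  rw [Real.norm_of_nonneg (by positivity)]
  exact mul_le_of_le_one_right (by positivity)
    (Real.exp_le_one_iff.2 (by rw [neg_nonpos]; positivity))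

lemma gaussianMixture_anti (hμ0 : ∀ᵐ s ∂μ, 0 < s) (hα : 0 < α)
    (hμ : ∀ l : ℝ, 0 < l → ∫ s, exp (-(l * s)) ∂μ = exp (-l ^ α)) {k a b : ℝ} (hk : 0 < k)
    (ha : 0 ≤ a) (hab : a ≤ b) : gaussianMixture μ k b ≤ gaussianMixture μ k a := by
  refine integral_mono_ae (integrable_rpow_neg_mul_exp hμ0 hα hμ hk (ha.trans hab))
    (integrable_rpow_neg_mul_exp hμ0 hα hμ hk ha) ?_
  filter_upwards [hμ0] with s hs
  gcongr

lemma rpow_neg_mul_exp_scale {k a s : ℝ} (ha : 0 < a) (hs : 0 < s) :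
    s ^ (-k) * exp (-(a / s)) = a ^ (-k) * ((a⁻¹ * s) ^ (-k) * exp (-(1 / (a⁻¹ * s)))) := by
  rw [← mul_assoc, ← Real.mul_rpow ha.le (by positivity), mul_inv_cancel_left₀ ha.ne']
  congr 3
  field_simp

lemma integral_one_sub_exp (hμ0 : ∀ᵐ s ∂μ, 0 < s)
    (hμ : ∀ l : ℝ, 0 < l → ∫ s, exp (-(l * s)) ∂μ = exp (-l ^ α)) {l : ℝ} (hl : 0 < l) :
    ∫ s, (1 - exp (-(l * s))) ∂μ = 1 - exp (-l ^ α) := by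
  rw [integral_sub (integrable_const _) (integrable_exp_neg_mul hμ0 hl.le), hμ l hl]
  simp

lemma exists_gaussianMixture_le (hμ0 : ∀ᵐ s ∂μ, 0 < s) (hα : 0 < α)
    (hμ : ∀ l : ℝ, 0 < l → ∫ s, exp (-(l * s)) ∂μ = exp (-l ^ α)) {k : ℝ} (hk : 0 < k) :
    ∃ C > 0, ∀ a : ℝ, 0 ≤ a → gaussianMixture μ k a ≤ C * (1 + 4 * a) ^ (-(k + α)) := by
  obtain ⟨C, hC0, hC⟩ := exists_rpow_mul_exp_le_one_sub_exp hk
  have htail : ∀ a : ℝ, 0 < a → gaussianMixture μ k a ≤ C * a ^ (-(k + α)) := by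
    intro a ha
    have hint : Integrable (fun s => 1 - exp (-(a⁻¹ * s))) μ :=
      (integrable_const _).sub (integrable_exp_neg_mul hμ0 (inv_nonneg.2 ha.le))
    calc gaussianMixture μ k a ≤ ∫ s, a ^ (-k) * (C * (1 - exp (-(a⁻¹ * s)))) ∂μ := by
          refine integral_mono_ae (integrable_rpow_neg_mul_exp hμ0 hα hμ hk ha.le)
            ((hint.const_mul _).const_mul _) ?_
          filter_upwards [hμ0] with s hs
          rw [rpow_neg_mul_exp_scale ha hs]
          exact mul_le_mul_of_nonneg_left (hC _ (by positivity)) (by positivity)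
      _ = a ^ (-k) * (C * (1 - exp (-a⁻¹ ^ α))) := by
          rw [integral_const_mul, integral_const_mul, integral_one_sub_exp hμ0 hμ (inv_pos.2 ha)]
      _ ≤ a ^ (-k) * (C * a⁻¹ ^ α) := by
          gcongr
          linarith [Real.add_one_le_exp (-a⁻¹ ^ α)]
      _ = C * a ^ (-(k + α)) := by
          rw [Real.inv_rpow ha.le, ← Real.rpow_neg ha.le, neg_add, Real.rpow_add ha]; ring
  refine ⟨max C (gaussianMixture μ k 0) * 5 ^ (k + α), by positivity, fun a ha => ?_⟩
  have hmul : ∀ b : ℝ, 0 < b → (5 : ℝ) ^ (k + α) * (5 * b) ^ (-(k + α)) = b ^ (-(k + α)) := by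
    intro b hb
    rw [Real.mul_rpow (by norm_num) hb.le, ← mul_assoc, ← Real.rpow_add (by norm_num)]
    simp
  rcases le_or_gt a 1 with h | h
  · calc gaussianMixture μ k a ≤ gaussianMixture μ k 0 :=
          gaussianMixture_anti hμ0 hα hμ hk le_rfl ha
      _ ≤ max C (gaussianMixture μ k 0) * 1 := by rw [mul_one]; exact le_max_right _ _
      _ = max C (gaussianMixture μ k 0) * ((5 : ℝ) ^ (k + α) * (5 * 1) ^ (-(k + α))) := by
          rw [hmul 1 one_pos, Real.one_rpow]
      _ ≤ max C (gaussianMixture μ k 0) * ((5 : ℝ) ^ (k + α) * (1 + 4 * a) ^ (-(k + α))) := by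
          gcongr max C _ * (_ * ?_)
          exact Real.rpow_le_rpow_of_nonpos (by positivity) (by linarith) (by linarith)
      _ = _ := by ring
  · have ha0 : 0 < a := by linarith
    calc gaussianMixture μ k a ≤ C * a ^ (-(k + α)) := htail a ha0
      _ ≤ max C (gaussianMixture μ k 0) * a ^ (-(k + α)) := by
          gcongr; exact le_max_left _ _
      _ = max C (gaussianMixture μ k 0) * ((5 : ℝ) ^ (k + α) * (5 * a) ^ (-(k + α))) := by
          rw [hmul a ha0]
      _ ≤ max C (gaussianMixture μ k 0) * ((5 : ℝ) ^ (k + α) * (1 + 4 * a) ^ (-(k + α))) := by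
          gcongr max C _ * (_ * ?_)
          exact Real.rpow_le_rpow_of_nonpos (by positivity) (by linarith) (by linarith)
      _ = _ := by ring

lemma exists_le_gaussianMixture (hμ0 : ∀ᵐ s ∂μ, 0 < s) (hα : 0 < α) (hα1 : α < 1)
    (hμ : ∀ l : ℝ, 0 < l → ∫ s, exp (-(l * s)) ∂μ = exp (-l ^ α)) {k : ℝ} (hk : 0 < k) :
    ∃ c > 0, ∀ a : ℝ, 0 ≤ a → c * (1 + 4 * a) ^ (-(k + α)) ≤ gaussianMixture μ k a := by
  let ε : ℝ := (1 / 4) ^ α⁻¹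
  let M : ℝ := (1 / 4) ^ (α - 1)⁻¹
  have hε : 0 < ε := by positivity
  have hM : 0 < M := by positivity
  have hεα : ε ^ α = 1 / 4 := Real.rpow_inv_rpow (by norm_num) hα.ne'
  have hMα : M ^ α = M / 4 := by
    have h1 : M ^ (α - 1) = 1 / 4 := Real.rpow_inv_rpow (by norm_num) (by linarith)
    have h2 := Real.rpow_sub_one hM.ne' α
    rw [h1] at h2
    field_simp at h2
    linarith
  obtain ⟨C, hC0, hC⟩ := exists_exp_sub_exp_le_rpow_mul_exp hk hε hM
  let A : ℝ := 2 ^ α⁻¹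
  have hA1 : 1 ≤ A := Real.one_le_rpow (by norm_num) (by positivity)
  have hAα : A ^ α = 2 := Real.rpow_inv_rpow (by norm_num) hα.ne'
  have htail : ∀ a : ℝ, A ≤ a → (4 * C)⁻¹ * a ^ (-(k + α)) ≤ gaussianMixture μ k a := by
    intro a haA
    have ha : 0 < a := by linarith
    have hi : ∀ c : ℝ, 0 < c → Integrable (fun s => 1 - exp (-(c * a⁻¹ * s))) μ := fun c hc =>
      (integrable_const _).sub (integrable_exp_neg_mul hμ0 (by positivity))
    have hi1 := hi 1 one_pos
    rw [one_mul] at hi1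
    set b := a⁻¹ ^ α with hb
    have hb0 : 0 < b := by positivity
    have hb2 : b ≤ 1 / 2 := by
      rw [hb, Real.inv_rpow ha.le, ← one_div]
      refine one_div_le_one_div_of_le (by norm_num) ?_
      rw [← hAα]
      exact Real.rpow_le_rpow (by positivity) haA hα.le
    have hJ : ∫ s, ((1 - exp (-(a⁻¹ * s))) - (1 - exp (-(ε * a⁻¹ * s)))
        - (1 - exp (-(M * a⁻¹ * s))) / M) ∂μ =
        (1 - exp (-b)) - (1 - exp (-(b / 4))) - (1 - exp (-(M / 4 * b))) / M := by
      have hi2 : Integrable (fun s => (1 - exp (-(a⁻¹ * s))) - (1 - exp (-(ε * a⁻¹ * s)))) μ :=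
        hi1.sub (hi ε hε)
      rw [integral_sub hi2 ((hi M hM).div_const M), integral_sub hi1 (hi ε hε),
        integral_div, integral_one_sub_exp hμ0 hμ (inv_pos.2 ha),
        integral_one_sub_exp hμ0 hμ (by positivity), integral_one_sub_exp hμ0 hμ (by positivity),
        Real.mul_rpow hε.le (by positivity), Real.mul_rpow hM.le (by positivity), hεα, hMα, ← hb,
        one_div_mul_eq_div]
    have hJb : b / 4 ≤ (1 - exp (-b)) - (1 - exp (-(b / 4))) - (1 - exp (-(M / 4 * b))) / M := by
      have h1 := sub_sq_div_two_le_one_sub_exp_neg hb0.le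
      have h2 : 1 - exp (-(b / 4)) ≤ b / 4 := by linarith [Real.add_one_le_exp (-(b / 4))]
      have h3 : (1 - exp (-(M / 4 * b))) / M ≤ b / 4 := by
        rw [div_le_iff₀ hM]
        linarith [Real.add_one_le_exp (-(M / 4 * b))]
      nlinarith
    have hmono : a ^ (-k) * ∫ s, ((1 - exp (-(a⁻¹ * s))) - (1 - exp (-(ε * a⁻¹ * s)))
        - (1 - exp (-(M * a⁻¹ * s))) / M) ∂μ ≤ C * gaussianMixture μ k a := by
      rw [gaussianMixture, ← integral_const_mul, ← integral_const_mul]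
      refine integral_mono_ae (((hi1.sub (hi ε hε)).sub ((hi M hM).div_const M)).const_mul _)
        ((integrable_rpow_neg_mul_exp hμ0 hα hμ hk ha.le).const_mul _) ?_
      filter_upwards [hμ0] with s hs
      rw [rpow_neg_mul_exp_scale ha hs, mul_left_comm C]
      refine mul_le_mul_of_nonneg_left ?_ (by positivity)
      have := hC (a⁻¹ * s) (by positivity)
      simpa only [mul_assoc] using this
    rw [hJ] at hmono
    have h1 : a ^ (-(k + α)) = a ^ (-k) * b := by
      rw [hb, Real.inv_rpow ha.le, ← Real.rpow_neg ha.le, neg_add, Real.rpow_add ha]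
    have h2 := (mul_le_mul_of_nonneg_left hJb (Real.rpow_nonneg ha.le (-k))).trans hmono
    rw [h1, inv_mul_le_iff₀ (by positivity)]
    linarith
  refine ⟨(4 * C)⁻¹ * A ^ (-(k + α)), by positivity, fun a ha => ?_⟩
  calc (4 * C)⁻¹ * A ^ (-(k + α)) * (1 + 4 * a) ^ (-(k + α))
      = (4 * C)⁻¹ * (A * (1 + 4 * a)) ^ (-(k + α)) := by
        rw [Real.mul_rpow (by positivity) (by positivity)]; ring
    _ ≤ (4 * C)⁻¹ * (max a A) ^ (-(k + α)) := by
        gcongr (4 * C)⁻¹ * ?_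
        refine Real.rpow_le_rpow_of_nonpos (by positivity) (max_le ?_ ?_) (by linarith) <;> nlinarith
    _ ≤ gaussianMixture μ k (max a A) := htail _ (le_max_right _ _)
    _ ≤ gaussianMixture μ k a := gaussianMixture_anti hμ0 hα hμ hk ha (le_max_left _ _)

lemma hasFDerivAt_gaussianMixture {E : Type*} [NormedAddCommGroup E] [InnerProductSpace ℝ E]
    (hμ0 : ∀ᵐ s ∂μ, 0 < s) (hα : 0 < α)
    (hμ : ∀ l : ℝ, 0 < l → ∫ s, exp (-(l * s)) ∂μ = exp (-l ^ α)) {k : ℝ} (hk : 0 < k) (w : E) :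
    HasFDerivAt (fun w : E => gaussianMixture μ k (‖w‖ ^ 2 / 4))
      ((-(1 / 2) * gaussianMixture μ (k + 1) (‖w‖ ^ 2 / 4)) • innerSL ℝ w) w := by
  have h1 : (-(1 / 2) * gaussianMixture μ (k + 1) (‖w‖ ^ 2 / 4)) • innerSL ℝ w =
      ∫ s, (-(1 / 2) * (s ^ (-(k + 1)) * exp (-(‖w‖ ^ 2 / 4 / s)))) • innerSL ℝ w ∂μ := by
    rw [integral_smul_const, integral_const_mul, gaussianMixture]
  rw [h1]
  have hk1 : 0 < k + 1 := by linarith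
  refine hasFDerivAt_integral_of_dominated_of_fderiv_le (ball_mem_nhds w one_pos)
    (F := fun w s => s ^ (-k) * exp (-(‖w‖ ^ 2 / 4 / s)))
    (F' := fun w s => (-(1 / 2) * (s ^ (-(k + 1)) * exp (-(‖w‖ ^ 2 / 4 / s)))) • innerSL ℝ w)
    (bound := fun s => s ^ (-(k + 1)) * (‖w‖ + 1)) ?_ ?_ ?_ ?_ ?_ ?_
  · refine Eventually.of_forall fun x => ?_
    exact (integrable_rpow_neg_mul_exp hμ0 hα hμ hk (by positivity)).aestronglyMeasurable
  · exact integrable_rpow_neg_mul_exp hμ0 hα hμ hk (by positivity)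
  · exact (((integrable_rpow_neg_mul_exp hμ0 hα hμ hk1
      (by positivity)).const_mul _).smul_const _).aestronglyMeasurable
  · filter_upwards [hμ0] with s hs x hx
    rw [norm_smul, innerSL_apply_norm, norm_mul, norm_mul, Real.norm_of_nonneg (exp_pos _).le,
      Real.norm_of_nonneg (Real.rpow_nonneg hs.le _)]
    have h2 : ‖x‖ ≤ ‖w‖ + 1 := by
      rw [mem_ball_iff_norm] at hx
      linarith [norm_sub_norm_le x w]
    have h3 : exp (-(‖x‖ ^ 2 / 4 / s)) ≤ 1 :=
      Real.exp_le_one_iff.2 (by rw [neg_nonpos]; positivity)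
    have h4 : ‖(-(1 / 2) : ℝ)‖ ≤ 1 := by norm_num
    have h5 : 0 ≤ s ^ (-(k + 1)) := by positivity
    calc _ ≤ 1 * (s ^ (-(k + 1)) * 1) * (‖w‖ + 1) := by gcongr
      _ = _ := by ring
  · exact (integrable_rpow_neg hμ0 hα hμ hk1).mul_const _
  · filter_upwards [hμ0] with s hs x hx
    have h2 : HasFDerivAt (fun x : E => ‖x‖ ^ 2) (2 • innerSL ℝ x) x :=
      (hasStrictFDerivAt_norm_sq x).hasFDerivAt
    have h3 := (((h2.mul_const (4 * s)⁻¹).neg).exp).const_mul (s ^ (-k))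
    have h4 : ∀ x : E, ‖x‖ ^ 2 / 4 / s = ‖x‖ ^ 2 * (4 * s)⁻¹ := fun x => by
      rw [div_div, div_eq_mul_inv]
    simp only [h4]
    refine h3.congr_fderiv ?_
    ext v
    rw [neg_add, Real.rpow_add hs, Real.rpow_neg_one]
    simp
    field_simp
    ring

end Subordinator

section Profile

variable {n : ℕ} {σ : ℝ}

lemma integrable_norm_rpow_mul_exp (hn : 1 ≤ n) (hσ : 0 < σ) {p b : ℝ} (hp : 0 ≤ p) (hb : 0 < b) :
    Integrable (fun ξ : Eu n => ‖ξ‖ ^ p * exp (-(b * ‖ξ‖ ^ σ))) := by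
  have : Nonempty (Fin n) := ⟨⟨0, hn⟩⟩
  rw [integrable_fun_norm_addHaar (volume : Measure (Eu n))
    (f := fun y : ℝ => y ^ p * exp (-(b * y ^ σ)))]
  refine (integrableOn_rpow_mul_exp_neg_mul_rpow (p := σ) (s := ((n - 1 : ℕ) : ℝ) + p) (b := b)
    (by have : (0 : ℝ) ≤ ((n - 1 : ℕ) : ℝ) := by positivity
        linarith) hσ hb).congr_fun ?_ measurableSet_Ioi
  intro y hy
  have hy : 0 < y := hy
  simp only [finrank_euclideanSpace, Fintype.card_fin, smul_eq_mul]
  rw [Real.rpow_add hy, Real.rpow_natCast, neg_mul, mul_assoc]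

lemma norm_cexp_I_mul_ofReal (x : ℝ) : ‖Complex.exp (Complex.I * (x : ℂ))‖ = 1 := by
  rw [mul_comm, Complex.norm_exp_ofReal_mul_I]

lemma integral_gaussian_mul_cexp (w : Eu n) {s : ℝ} (hs : 0 < s) :
    ∫ ξ : Eu n, ((exp (-(‖ξ‖ ^ 2 * s)) : ℝ) : ℂ) * Complex.exp (Complex.I * (⟪w, ξ⟫_ℝ : ℂ)) =
      ((π ^ ((n : ℝ) / 2) * (s ^ (-((n : ℝ) / 2)) * exp (-(‖w‖ ^ 2 / 4 / s))) : ℝ) : ℂ) := by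
  have h := GaussianFourier.integral_cexp_neg_mul_sq_norm_add (V := Eu n) (b := (s : ℂ))
    (by simpa using hs) Complex.I w
  have h1 : ∀ ξ : Eu n, ((exp (-(‖ξ‖ ^ 2 * s)) : ℝ) : ℂ) *
      Complex.exp (Complex.I * (⟪w, ξ⟫_ℝ : ℂ)) =
      Complex.exp (-(s : ℂ) * ‖ξ‖ ^ 2 + Complex.I * (⟪w, ξ⟫_ℝ : ℂ)) := by
    intro ξ
    rw [Complex.exp_add]
    push_cast
    congr 2; ring
  simp_rw [h1]
  rw [h, finrank_euclideanSpace, Fintype.card_fin, ← mul_assoc, Real.rpow_neg hs.le,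
    ← div_eq_mul_inv, ← Real.div_rpow Real.pi_pos.le hs.le]
  push_cast
  rw [Complex.ofReal_cpow (by positivity)]
  push_cast
  congr 2
  rw [Complex.I_sq]
  field_simp

variable {μ : Measure ℝ} [IsProbabilityMeasure μ]

lemma integral_exp_neg_norm_sq_mul (hσ : 0 < σ)
    (hμ : ∀ l : ℝ, 0 < l → ∫ s, exp (-(l * s)) ∂μ = exp (-l ^ (σ / 2))) (ξ : Eu n) :
    ∫ s, exp (-(‖ξ‖ ^ 2 * s)) ∂μ = exp (-‖ξ‖ ^ σ) := by
  rcases eq_or_ne ξ 0 with rfl | hξ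
  · simp [Real.zero_rpow hσ.ne']
  · have : 0 < ‖ξ‖ := norm_pos_iff.2 hξ
    rw [hμ _ (by positivity), ← Real.rpow_natCast, ← Real.rpow_mul this.le]
    congr 3
    push_cast; ring

/-- The Fourier transform of `e^{-|ξ|^σ}` as a mixture of Gaussians. -/
lemma integral_exp_neg_norm_rpow_mul_cexp (hn : 1 ≤ n) (hσ : 0 < σ) (hμ0 : ∀ᵐ s ∂μ, 0 < s)
    (hμ : ∀ l : ℝ, 0 < l → ∫ s, exp (-(l * s)) ∂μ = exp (-l ^ (σ / 2))) (w : Eu n) :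
    ∫ ξ : Eu n, ((exp (-‖ξ‖ ^ σ) : ℝ) : ℂ) * Complex.exp (Complex.I * (⟪w, ξ⟫_ℝ : ℂ)) =
      ((π ^ ((n : ℝ) / 2) * gaussianMixture μ (n / 2) (‖w‖ ^ 2 / 4) : ℝ) : ℂ) := by
  let G : Eu n → ℝ → ℂ := fun ξ s =>
    ((exp (-(‖ξ‖ ^ 2 * s)) : ℝ) : ℂ) * Complex.exp (Complex.I * (⟪w, ξ⟫_ℝ : ℂ))
  have hGc : Continuous (Function.uncurry G) := by
    simp only [Function.uncurry_def, G]; fun_prop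
  have hGn : ∀ ξ s, ‖G ξ s‖ = exp (-(‖ξ‖ ^ 2 * s)) := fun ξ s => by
    simp only [G]
    rw [norm_mul, norm_cexp_I_mul_ofReal, mul_one, Complex.norm_real,
      Real.norm_of_nonneg (exp_pos _).le]
  have hGi : Integrable (Function.uncurry G) (volume.prod μ) := by
    rw [integrable_prod_iff hGc.aestronglyMeasurable]
    constructor
    · refine Eventually.of_forall fun ξ => ?_
      have h : Integrable (fun s => ((exp (-(‖ξ‖ ^ 2 * s)) : ℝ) : ℂ)) μ :=
        (integrable_exp_neg_mul hμ0 (by positivity)).ofReal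
      exact h.mul_const (Complex.exp (Complex.I * (⟪w, ξ⟫_ℝ : ℂ)))
    · simp only [Function.uncurry_apply_pair, hGn, integral_exp_neg_norm_sq_mul hσ hμ]
      simpa using integrable_norm_rpow_mul_exp hn hσ le_rfl one_pos
  have h1 : ∀ ξ : Eu n, ((exp (-‖ξ‖ ^ σ) : ℝ) : ℂ) * Complex.exp (Complex.I * (⟪w, ξ⟫_ℝ : ℂ)) =
      ∫ s, G ξ s ∂μ := by
    intro ξ
    simp only [G]
    rw [integral_mul_const, integral_complex_ofReal, integral_exp_neg_norm_sq_mul hσ hμ]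
  simp_rw [h1]
  rw [integral_integral_swap hGi, gaussianMixture, ← integral_const_mul, ← integral_complex_ofReal]
  refine integral_congr_ae ?_
  filter_upwards [hμ0] with s hs
  exact integral_gaussian_mul_cexp w hs

lemma integral_exp_neg_mul_norm_rpow_mul_cexp (hn : 1 ≤ n) (hσ : 0 < σ) (hμ0 : ∀ᵐ s ∂μ, 0 < s)
    (hμ : ∀ l : ℝ, 0 < l → ∫ s, exp (-(l * s)) ∂μ = exp (-l ^ (σ / 2))) (w : Eu n) {t : ℝ}
    (ht : 0 < t) :
    ∫ ξ : Eu n, ((exp (-(t * ‖ξ‖ ^ σ)) : ℝ) : ℂ) * Complex.exp (Complex.I * (⟪w, ξ⟫_ℝ : ℂ)) =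
      ((π ^ ((n : ℝ) / 2) * (t ^ (-(n / σ)) *
        gaussianMixture μ (n / 2) (‖t ^ (-σ⁻¹) • w‖ ^ 2 / 4)) : ℝ) : ℂ) := by
  set r := t ^ σ⁻¹ with hr
  have hr0 : 0 < r := by positivity
  have hrσ : r ^ σ = t := Real.rpow_inv_rpow ht.le hσ.ne'
  have hrinv : t ^ (-σ⁻¹) = r⁻¹ := Real.rpow_neg ht.le _
  have hrn : t ^ (-(n / σ)) = (r ^ n)⁻¹ := by
    rw [hr, ← Real.rpow_natCast, ← Real.rpow_mul ht.le, ← Real.rpow_neg ht.le]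
    congr 2; ring
  have h1 : ∀ ξ : Eu n, ((exp (-(t * ‖ξ‖ ^ σ)) : ℝ) : ℂ) *
      Complex.exp (Complex.I * (⟪w, ξ⟫_ℝ : ℂ)) =
      ((exp (-‖r • ξ‖ ^ σ) : ℝ) : ℂ) * Complex.exp (Complex.I * (⟪r⁻¹ • w, r • ξ⟫_ℝ : ℂ)) := by
    intro ξ
    rw [norm_smul, Real.norm_of_nonneg hr0.le, Real.mul_rpow hr0.le (norm_nonneg _), hrσ,
      real_inner_smul_left, real_inner_smul_right, inv_mul_cancel_left₀ hr0.ne']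
  simp_rw [h1]
  rw [Measure.integral_comp_smul volume (fun ξ : Eu n => ((exp (-‖ξ‖ ^ σ) : ℝ) : ℂ) *
    Complex.exp (Complex.I * (⟪r⁻¹ • w, ξ⟫_ℝ : ℂ))) r,
    integral_exp_neg_norm_rpow_mul_cexp hn hσ hμ0 hμ, hrinv, hrn, finrank_euclideanSpace,
    Fintype.card_fin, abs_of_pos (by positivity), Complex.real_smul]
  push_cast
  ring

/-- The Fourier transform of `|ξ|^σ e^{-|ξ|^σ}`, obtained by differentiating that of
`e^{-t|ξ|^σ}` at `t = 1`. -/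
lemma integral_norm_rpow_mul_exp_neg_norm_rpow_mul_cexp (hn : 1 ≤ n) (hσ : 0 < σ)
    (hμ0 : ∀ᵐ s ∂μ, 0 < s)
    (hμ : ∀ l : ℝ, 0 < l → ∫ s, exp (-(l * s)) ∂μ = exp (-l ^ (σ / 2))) (w : Eu n) :
    ∫ ξ : Eu n, ((‖ξ‖ ^ σ * exp (-‖ξ‖ ^ σ) : ℝ) : ℂ) *
        Complex.exp (Complex.I * (⟪w, ξ⟫_ℝ : ℂ)) =
      ((π ^ ((n : ℝ) / 2) * (n / σ * gaussianMixture μ (n / 2) (‖w‖ ^ 2 / 4) -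
        1 / (2 * σ) * (‖w‖ ^ 2 * gaussianMixture μ (n / 2 + 1) (‖w‖ ^ 2 / 4))) : ℝ) : ℂ) := by
  have hn' : (0 : ℝ) < n / 2 := by
    have : (0 : ℝ) < n := by exact_mod_cast hn
    positivity
  have hbase : ∀ t : ℝ, 0 < t → Integrable (fun ξ : Eu n => exp (-(t * ‖ξ‖ ^ σ))) := fun t ht => by
    simpa using integrable_norm_rpow_mul_exp hn hσ le_rfl ht
  have hce : Continuous (fun ξ : Eu n => Complex.exp (Complex.I * (⟪w, ξ⟫_ℝ : ℂ))) := by fun_prop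
  have hnσ : Continuous (fun ξ : Eu n => ‖ξ‖ ^ σ) :=
    continuous_norm.rpow_const fun _ => Or.inr hσ.le
  have hL := (hasDerivAt_integral_of_dominated_loc_of_deriv_le (μ := (volume : Measure (Eu n)))
    (x₀ := (1 : ℝ)) (ball_mem_nhds (1 : ℝ) (show (0 : ℝ) < 1 / 2 by norm_num))
    (F := fun (t : ℝ) (ξ : Eu n) => ((exp (-(t * ‖ξ‖ ^ σ)) : ℝ) : ℂ) *
      Complex.exp (Complex.I * (⟪w, ξ⟫_ℝ : ℂ)))
    (F' := fun (t : ℝ) (ξ : Eu n) => ((exp (-(t * ‖ξ‖ ^ σ)) * (-‖ξ‖ ^ σ) : ℝ) : ℂ) *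
      Complex.exp (Complex.I * (⟪w, ξ⟫_ℝ : ℂ)))
    (bound := fun ξ : Eu n => ‖ξ‖ ^ σ * exp (-(1 / 2 * ‖ξ‖ ^ σ)))
    (Eventually.of_forall fun t => Continuous.aestronglyMeasurable (by fun_prop))
    ?_ (Continuous.aestronglyMeasurable (by fun_prop)) ?_
    (integrable_norm_rpow_mul_exp hn hσ hσ.le (by norm_num)) ?_).2
  rotate_left
  · refine (hbase 1 one_pos).mono' (Continuous.aestronglyMeasurable (by fun_prop)) ?_
    filter_upwards with ξ
    rw [norm_mul, norm_cexp_I_mul_ofReal, mul_one, Complex.norm_real,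
      Real.norm_of_nonneg (exp_pos _).le]
  · filter_upwards with ξ t ht
    have ht' : 1 / 2 ≤ t := by
      rw [mem_ball, Real.dist_eq, abs_lt] at ht; linarith [ht.1]
    have h0 : 0 ≤ ‖ξ‖ ^ σ := by positivity
    rw [norm_mul, norm_cexp_I_mul_ofReal, mul_one, Complex.norm_real, norm_mul, norm_neg,
      Real.norm_of_nonneg (exp_pos _).le, Real.norm_of_nonneg h0, mul_comm]
    gcongr
  · filter_upwards with ξ t _
    have h1 : HasDerivAt (fun t : ℝ => exp (-(t * ‖ξ‖ ^ σ)))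
        (exp (-(t * ‖ξ‖ ^ σ)) * (-‖ξ‖ ^ σ)) t := by
      simpa using ((hasDerivAt_id t).mul_const (‖ξ‖ ^ σ)).neg.exp
    exact h1.ofReal_comp.mul_const _
  have hM := hasFDerivAt_gaussianMixture hμ0 (half_pos hσ) hμ hn' w
  have hsc : HasDerivAt (fun t : ℝ => t ^ (-σ⁻¹) • w) ((-σ⁻¹) • w) 1 := by
    simpa using (Real.hasDerivAt_rpow_const (x := 1) (p := -σ⁻¹) (Or.inl one_ne_zero)).smul_const w
  have hpow : HasDerivAt (fun t : ℝ => t ^ (-(n / σ))) (-(n / σ)) 1 := by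
    simpa using Real.hasDerivAt_rpow_const (x := 1) (p := -(n / σ)) (Or.inl one_ne_zero)
  have hcomp : HasDerivAt (fun t : ℝ => gaussianMixture μ (n / 2) (‖t ^ (-σ⁻¹) • w‖ ^ 2 / 4)) _ 1 :=
    HasFDerivAt.comp_hasDerivAt (f := fun t : ℝ => t ^ (-σ⁻¹) • w)
      (l := fun w : Eu n => gaussianMixture μ (n / 2) (‖w‖ ^ 2 / 4)) 1
      (by simpa only [Real.one_rpow, one_smul] using hM) hsc
  have hR := ((hpow.mul hcomp).const_mul (π ^ ((n : ℝ) / 2))).ofReal_comp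
  have huniq := hL.unique (hR.congr_of_eventuallyEq (by
    filter_upwards [lt_mem_nhds (zero_lt_one' ℝ)] with t ht
    exact integral_exp_neg_mul_norm_rpow_mul_cexp hn hσ hμ0 hμ w ht))
  have hneg : ∀ ξ : Eu n, ((‖ξ‖ ^ σ * exp (-‖ξ‖ ^ σ) : ℝ) : ℂ) *
      Complex.exp (Complex.I * (⟪w, ξ⟫_ℝ : ℂ)) =
      -(((exp (-(1 * ‖ξ‖ ^ σ)) * (-‖ξ‖ ^ σ) : ℝ) : ℂ) *
        Complex.exp (Complex.I * (⟪w, ξ⟫_ℝ : ℂ))) := by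
    intro ξ
    push_cast
    rw [one_mul]; ring
  simp_rw [hneg]
  rw [integral_neg, huniq, ← Complex.ofReal_neg]
  congr 1
  simp [real_inner_smul_right]
  field_simp
  ring

lemma exists_Psi_LPsi_eq_gaussianMixture (hn : 1 ≤ n) (hσ : 0 < σ) (hμ0 : ∀ᵐ s ∂μ, 0 < s)
    (hμ : ∀ l : ℝ, 0 < l → ∫ s, exp (-(l * s)) ∂μ = exp (-l ^ (σ / 2))) :
    ∃ C > (0 : ℝ), (∀ w, Psi n σ w = C * gaussianMixture μ (n / 2) (‖w‖ ^ 2 / 4)) ∧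
      ∀ w, LPsi n σ w = C * (n / σ * gaussianMixture μ (n / 2) (‖w‖ ^ 2 / 4) -
        1 / (2 * σ) * (‖w‖ ^ 2 * gaussianMixture μ (n / 2 + 1) (‖w‖ ^ 2 / 4))) := by
  refine ⟨(2 * π) ^ (-(n : ℝ)) * π ^ ((n : ℝ) / 2), by positivity, fun w => ?_, fun w => ?_⟩
  · rw [Psi, integral_exp_neg_norm_rpow_mul_cexp hn hσ hμ0 hμ, Complex.ofReal_re, mul_assoc]
  · rw [LPsi, integral_norm_rpow_mul_exp_neg_norm_rpow_mul_cexp hn hσ hμ0 hμ, Complex.ofReal_re,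
      mul_assoc]

end Profile

/-- Sharp bounds for the isotropic profile `Ψ_n`, its fractional
derivative `LΨ_n`, and their gradients. -/
theorem stmt15 (n : ℕ) (hn : 1 ≤ n) (σ : ℝ) (hσ0 : 0 < σ) (hσ2 : σ < 2) :
    ∃ c1 > (0 : ℝ), ∃ c2 > (0 : ℝ), ∃ c > (0 : ℝ), ∀ w : Eu n,
      c1 * (1 + ‖w‖ ^ 2) ^ (-((n : ℝ) + σ) / 2) ≤ Psi n σ w ∧
      Psi n σ w ≤ c2 * (1 + ‖w‖ ^ 2) ^ (-((n : ℝ) + σ) / 2) ∧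
      |LPsi n σ w| ≤ c * (1 + ‖w‖ ^ 2) ^ (-((n : ℝ) + σ) / 2) ∧
      ‖fderiv ℝ (Psi n σ) w‖ ≤ c * (1 + ‖w‖ ^ 2) ^ (-((n : ℝ) + σ + 1) / 2) ∧
      ‖fderiv ℝ (LPsi n σ) w‖ ≤ c * (1 + ‖w‖ ^ 2) ^ (-((n : ℝ) + σ + 1) / 2) := by
  have hn0 : (0 : ℝ) < n := by exact_mod_cast hn
  obtain ⟨μ, hμP, hμ0, hμ⟩ := exists_stable_subordinator (half_pos hσ0) (by linarith : σ / 2 < 1)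
  obtain ⟨C, hC, hΨ, hLΨ⟩ := exists_Psi_LPsi_eq_gaussianMixture hn hσ0 hμ0 hμ
  have hα := half_pos hσ0
  have hk0 : (0 : ℝ) < n / 2 := by positivity
  have hk1 : (0 : ℝ) < n / 2 + 1 := by positivity
  have hk2 : (0 : ℝ) < n / 2 + 1 + 1 := by positivity
  obtain ⟨c0, hc0, hlow⟩ := exists_le_gaussianMixture hμ0 hα (by linarith) hμ hk0
  obtain ⟨C0, hC0, hup0⟩ := exists_gaussianMixture_le hμ0 hα hμ hk0
  obtain ⟨C1, hC1, hup1⟩ := exists_gaussianMixture_le hμ0 hα hμ hk1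
  obtain ⟨C2, hC2, hup2⟩ := exists_gaussianMixture_le hμ0 hα hμ hk2
  set A1 := C * (n / σ * C0 + 1 / (2 * σ) * C1) with hA1
  set A2 := C * (1 / 2 * C1) with hA2
  set A3 := C * ((n / (2 * σ) + 1 / σ) * C1 + 1 / (4 * σ) * C2) with hA3
  have hA1p : 0 < A1 := by positivity
  have hA2p : 0 < A2 := by positivity
  have hA3p : 0 < A3 := by positivity
  refine ⟨C * c0, by positivity, C * C0, by positivity, A1 + A2 + A3, by positivity, fun w => ?_⟩
  have hD0 := hasFDerivAt_gaussianMixture hμ0 hα hμ hk0 w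
  have hD1 := hasFDerivAt_gaussianMixture hμ0 hα hμ hk1 w
  have hDΨ : HasFDerivAt (Psi n σ) _ w := (hD0.const_mul C).congr_of_eventuallyEq
    (Eventually.of_forall hΨ)
  have hDLΨ : HasFDerivAt (LPsi n σ) _ w := ((((hD0.const_mul (n / σ)).sub
    (((hasStrictFDerivAt_norm_sq w).hasFDerivAt.mul hD1).const_mul
      (1 / (2 * σ)))).const_mul C)).congr_of_eventuallyEq (Eventually.of_forall hLΨ)
  have h4 : 1 + 4 * (‖w‖ ^ 2 / 4) = 1 + ‖w‖ ^ 2 := by ring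
  have ha : 0 ≤ ‖w‖ ^ 2 / 4 := by positivity
  replace hlow := hlow _ ha
  replace hup0 := hup0 _ ha
  replace hup1 := hup1 _ ha
  replace hup2 := hup2 _ ha
  have hm0 := gaussianMixture_nonneg hμ0 (n / 2) (‖w‖ ^ 2 / 4)
  have hm1 := gaussianMixture_nonneg hμ0 (n / 2 + 1) (‖w‖ ^ 2 / 4)
  have hm2 := gaussianMixture_nonneg hμ0 (n / 2 + 1 + 1) (‖w‖ ^ 2 / 4)
  rw [hDΨ.fderiv, hDLΨ.fderiv, hΨ, hLΨ]
  rw [h4] at hlow hup0 hup1 hup2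
  set m0 := gaussianMixture μ (n / 2) (‖w‖ ^ 2 / 4)
  set m1 := gaussianMixture μ (n / 2 + 1) (‖w‖ ^ 2 / 4)
  set m2 := gaussianMixture μ (n / 2 + 1 + 1) (‖w‖ ^ 2 / 4)
  have hwB : ‖w‖ ^ 2 ≤ 1 + ‖w‖ ^ 2 := by linarith
  set B := 1 + ‖w‖ ^ 2 with hB
  have hB0 : 0 < B := by positivity
  have hwR : ‖w‖ ≤ B ^ (1 / 2 : ℝ) := by
    rw [← Real.sqrt_eq_rpow]
    exact Real.le_sqrt_of_sq_le hwB
  have hP1 : B * B ^ (-((n : ℝ) / 2 + 1 + σ / 2)) = B ^ (-((n : ℝ) + σ) / 2) := by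
    nth_rewrite 1 [← Real.rpow_one B]
    rw [← Real.rpow_add hB0]
    congr 1; ring
  have hP2 : B * B ^ (-((n : ℝ) / 2 + 1 + 1 + σ / 2)) = B ^ (-((n : ℝ) / 2 + 1 + σ / 2)) := by
    nth_rewrite 1 [← Real.rpow_one B]
    rw [← Real.rpow_add hB0]
    congr 1; ring
  have hP3 : B ^ (-((n : ℝ) / 2 + 1 + σ / 2)) * B ^ (1 / 2 : ℝ) =
      B ^ (-((n : ℝ) + σ + 1) / 2) := by
    rw [← Real.rpow_add hB0]
    congr 1; ring
  have he : -((n : ℝ) / 2 + σ / 2) = -((n : ℝ) + σ) / 2 := by ring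
  rw [he] at hlow hup0
  have hBm1 : ‖w‖ ^ 2 * m1 ≤ C1 * B ^ (-((n : ℝ) + σ) / 2) := by
    calc ‖w‖ ^ 2 * m1 ≤ B * (C1 * B ^ (-((n : ℝ) / 2 + 1 + σ / 2))) := by gcongr
      _ = _ := by rw [← hP1]; ring
  have hBm2 : ‖w‖ ^ 2 * m2 ≤ C2 * B ^ (-((n : ℝ) / 2 + 1 + σ / 2)) := by
    calc ‖w‖ ^ 2 * m2 ≤ B * (C2 * B ^ (-((n : ℝ) / 2 + 1 + 1 + σ / 2))) := by gcongr
      _ = _ := by rw [← hP2]; ring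
  refine ⟨?_, ?_, ?_, ?_, ?_⟩
  · rw [mul_assoc]; gcongr
  · rw [mul_assoc]; gcongr
  · calc |C * (n / σ * m0 - 1 / (2 * σ) * (‖w‖ ^ 2 * m1))|
        ≤ C * (n / σ * m0 + 1 / (2 * σ) * (‖w‖ ^ 2 * m1)) := by
          rw [abs_mul, abs_of_pos hC]
          gcongr
          refine (abs_sub _ _).trans (le_of_eq ?_)
          rw [abs_of_nonneg (by positivity), abs_of_nonneg (by positivity)]
      _ ≤ C * (n / σ * (C0 * B ^ (-((n : ℝ) + σ) / 2)) +
          1 / (2 * σ) * (C1 * B ^ (-((n : ℝ) + σ) / 2))) := by gcongr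
      _ = A1 * B ^ (-((n : ℝ) + σ) / 2) := by rw [hA1]; ring
      _ ≤ _ := by gcongr; linarith
  · calc _ = ‖(-(C * (1 / 2 * m1))) • innerSL ℝ w‖ := by
          congr 1
          rw [smul_smul]
          congr 1; ring
      _ = C * (1 / 2 * m1) * ‖w‖ := by
          rw [norm_smul, norm_neg, Real.norm_of_nonneg (by positivity), innerSL_apply_norm]
      _ ≤ C * (1 / 2 * (C1 * B ^ (-((n : ℝ) / 2 + 1 + σ / 2)))) * B ^ (1 / 2 : ℝ) := by gcongr
      _ = A2 * B ^ (-((n : ℝ) + σ + 1) / 2) := by rw [hA2, ← hP3]; ring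
      _ ≤ _ := by gcongr; linarith
  · calc _ = ‖(C * (1 / (4 * σ) * (‖w‖ ^ 2 * m2) - (n / (2 * σ) + 1 / σ) * m1)) •
          innerSL ℝ w‖ := by
          congr 1
          ext v
          simp
          field_simp
          ring
      _ = C * |1 / (4 * σ) * (‖w‖ ^ 2 * m2) - (n / (2 * σ) + 1 / σ) * m1| * ‖w‖ := by
          rw [norm_smul, norm_mul, Real.norm_of_nonneg hC.le, Real.norm_eq_abs, innerSL_apply_norm]
      _ ≤ C * ((n / (2 * σ) + 1 / σ) * m1 + 1 / (4 * σ) * (‖w‖ ^ 2 * m2)) * ‖w‖ := by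
          gcongr
          refine (abs_sub _ _).trans (le_of_eq ?_)
          rw [abs_of_nonneg (by positivity), abs_of_nonneg (by positivity), add_comm]
      _ ≤ C * ((n / (2 * σ) + 1 / σ) * (C1 * B ^ (-((n : ℝ) / 2 + 1 + σ / 2))) +
          1 / (4 * σ) * (C2 * B ^ (-((n : ℝ) / 2 + 1 + σ / 2)))) * B ^ (1 / 2 : ℝ) := by gcongr
      _ = A3 * B ^ (-((n : ℝ) + σ + 1) / 2) := by rw [hA3, ← hP3]; ring
      _ ≤ _ := by gcongr; linarith
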